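/- arXiv:1009.0046 — 2 statements merged into one kernel-verified Lean document; each statement's English description precedes it below -/
import Mathlib

section
/- Let A be a nonnegatively filtered algebra over a field k such that the associated graded algebra Gr A is commutative. Suppose z_1,...,z_n are central elements of A such that the top symbols Gr z_1,...,Gr z_n form a regular sequence in Gr A. Then the associated graded ring of the quotient A/(z_1,...,z_n) is isomorphic to Gr A / (Gr z_1,...,Gr z_n). -/
/-- A nonnegative exhaustive algebra filtration `F₀ ⊆ F₁ ⊆ ⋯` on a `k`-algebra `A`,
with `1 ∈ F₀` and `Fᵢ · Fⱼ ⊆ F_{i+j}`. -/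
structure AlgFiltration (k A : Type*) [Field k] [Ring A] [Algebra k A] where
  F : ℕ → Submodule k A
  mono : Monotone F
  one_mem : (1 : A) ∈ F 0
  mul_mem : ∀ {i j : ℕ} {a b : A}, a ∈ F i → b ∈ F j → a * b ∈ F (i + j)
  exhaustive : ∀ a : A, ∃ i, a ∈ F i

namespace AlgFiltration

variable {k A : Type*} [Field k] [Ring A] [Algebra k A]

/-- `prev i` is `F (i-1)`, with the convention `F (-1) = 0`.  An element `a ∈ F i` has
zero symbol in degree `i` of `Gr A` exactly when `a ∈ prev i`. -/
def prev (𝓕 : AlgFiltration k A) (i : ℕ) : Submodule k A :=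
  if i = 0 then ⊥ else 𝓕.F (i - 1)

/-- The associated graded algebra `Gr A` is commutative: all commutators drop in
filtration degree. -/
def GrComm (𝓕 : AlgFiltration k A) : Prop :=
  ∀ {i j : ℕ} {a b : A}, a ∈ 𝓕.F i → b ∈ 𝓕.F j → a * b - b * a ∈ 𝓕.prev (i + j)

/-- The degree-`i` part of the ideal of `Gr A` generated by the top symbols
`Gr z_j` (`j < l`) of elements `z_j` of degree `d j`, pulled back to `F i`: an element
`a ∈ F i` has top symbol in this ideal iff `a ∈ symIdeal 𝓕 z d l i`. -/
def symIdeal (𝓕 : AlgFiltration k A) {n : ℕ} (z : Fin n → A) (d : Fin n → ℕ)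
    (l i : ℕ) : Submodule k A :=
  (⨆ (j : Fin n) (_ : (j : ℕ) < l) (_ : d j ≤ i),
      (𝓕.F (i - d j)).map (LinearMap.mulRight k (z j))) ⊔ 𝓕.prev i

end AlgFiltration

/-!
Let `J` be the left ideal generated by `z₁, …, z_{l-1}` and let `a = b z_l + c` with `c ∈ J`. If
`b z_l` has larger degree than `a`, its symbol cancels against that of `c`, so it lies in `Gr J`.
By regularity the symbol of `b` lies in `Gr J` too: `b = s + b'` with `s ∈ J` and `b'` of smaller
degree, and `a = b' z_l + (s z_l + c)`. Iterating, every element of the ideal is a combination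
of the `z_j` in which no leading terms cancel, and such a combination has its symbol in the ideal
generated by the symbols.
-/

theorem mul_mem_span_of_forall_mem {R : Type*} [Semiring R] {S : Set R} {r : R}
    (h : ∀ x ∈ S, x * r ∈ Ideal.span S) : ∀ c ∈ Ideal.span S, c * r ∈ Ideal.span S :=
  (Submodule.span_le (p := Submodule.comap (LinearMap.toSpanSingleton R R r) (Ideal.span S))).2 h

namespace AlgFiltration

variable {k A ι : Type*} [Field k] [Ring A] [Algebra k A] (𝓕 : AlgFiltration k A)

theorem prev_zero : 𝓕.prev 0 = ⊥ := rfl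

theorem prev_succ (i : ℕ) : 𝓕.prev (i + 1) = 𝓕.F i := rfl

theorem prev_le (i : ℕ) : 𝓕.prev i ≤ 𝓕.F i := by
  cases i with
  | zero => exact bot_le
  | succ i => exact 𝓕.mono i.le_succ

theorem le_prev_of_lt {i m : ℕ} (h : i < m) : 𝓕.F i ≤ 𝓕.prev m := by
  cases m with
  | zero => omega
  | succ m => exact 𝓕.mono (Nat.le_of_lt_succ h)

/-- The multiples `b * z` of an element `z` of degree `d` that lie in `F i` for degree reasons:
those with `b ∈ F (i - d)`, and only `0` if `i < d`. -/
def boundedMultiples (z : A) (d i : ℕ) : Submodule k A :=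
  ⨆ _ : d ≤ i, (𝓕.F (i - d)).map (LinearMap.mulRight k z)

/-- The combinations `∑ j ∈ s, b j * z j` of elements `z j` of degree `d j` all of whose terms lie
in `F i` for degree reasons. -/
def boundedSpan (z : ι → A) (d : ι → ℕ) (s : Set ι) (i : ℕ) : Submodule k A :=
  ⨆ j ∈ s, 𝓕.boundedMultiples (z j) (d j) i

/-- The symbol of `z` in degree `d` acts injectively by right multiplication on `Gr (A ⧸ J)`, for a
left ideal `J`. The vanishing in `Gr (A ⧸ J)` of the class of `a ∈ F i` is expressed in `A`, as
`a ∈ J + F (i - 1)`. -/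
def IsGrRegular (J : Ideal A) (z : A) (d : ℕ) : Prop :=
  ∀ i, ∀ a ∈ 𝓕.F i, a * z ∈ J.restrictScalars k ⊔ 𝓕.prev (i + d) →
    a ∈ J.restrictScalars k ⊔ 𝓕.prev i

variable {𝓕}

theorem symIdeal_eq_boundedSpan_sup_prev {n : ℕ} (z : Fin n → A) (d : Fin n → ℕ) (l i : ℕ) :
    𝓕.symIdeal z d l i = 𝓕.boundedSpan z d {j | (j : ℕ) < l} i ⊔ 𝓕.prev i :=
  rfl

theorem mul_mem_boundedMultiples {z b : A} {d m i : ℕ} (hb : b ∈ 𝓕.F m) (h : m + d ≤ i) :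
    b * z ∈ 𝓕.boundedMultiples z d i :=
  Submodule.mem_iSup_of_mem (by omega) ⟨b, 𝓕.mono (by omega) hb, rfl⟩

theorem boundedMultiples_le {z : A} {d : ℕ} (hz : z ∈ 𝓕.F d) (i : ℕ) :
    𝓕.boundedMultiples z d i ≤ 𝓕.F i := by
  refine iSup_le fun hd => ?_
  rintro _ ⟨b, hb, rfl⟩
  rw [← Nat.sub_add_cancel hd]
  exact 𝓕.mul_mem hb hz

theorem boundedMultiples_le_span (z : A) (d i : ℕ) :
    𝓕.boundedMultiples z d i ≤ (Ideal.span {z}).restrictScalars k := by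
  refine iSup_le fun _ => ?_
  rintro _ ⟨b, -, rfl⟩
  exact Ideal.mem_span_singleton'.2 ⟨b, rfl⟩

theorem boundedSpan_empty (z : ι → A) (d : ι → ℕ) (i : ℕ) : 𝓕.boundedSpan z d ∅ i = ⊥ :=
  iSup_emptyset

theorem boundedSpan_insert (z : ι → A) (d : ι → ℕ) (t : ι) (s : Set ι) (i : ℕ) :
    𝓕.boundedSpan z d (insert t s) i =
      𝓕.boundedMultiples (z t) (d t) i ⊔ 𝓕.boundedSpan z d s i :=
  iSup_insert

theorem inf_sup_prev (N : Submodule k A) (i : ℕ) :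
    𝓕.F i ⊓ (N ⊔ 𝓕.prev i) = 𝓕.F i ⊓ N ⊔ 𝓕.prev i :=
  (inf_sup_assoc_of_le N (𝓕.prev_le i)).symm

section Descent

variable {J : Ideal A} {z : A} {d : ℕ}

theorem IsGrRegular.exists_mul_add_eq (hreg : 𝓕.IsGrRegular J z d)
    (hJz : ∀ c ∈ J, c * z ∈ J) {i m : ℕ} {b c : A} (hb : b ∈ 𝓕.F m) (hc : c ∈ J)
    (ha : b * z + c ∈ 𝓕.F i) (him : i < m + d) :
    ∃ b' ∈ 𝓕.prev m, ∃ c' ∈ J, b' * z + c' = b * z + c := by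
  have hbz : b * z ∈ J.restrictScalars k ⊔ 𝓕.prev (m + d) := by
    rw [← add_sub_cancel_right (b * z) c]
    exact sub_mem (Submodule.mem_sup_right (𝓕.le_prev_of_lt him ha)) (Submodule.mem_sup_left hc)
  obtain ⟨s, hs, b', hb', rfl⟩ := Submodule.mem_sup.1 (hreg m b hb hbz)
  exact ⟨b', hb', s * z + c, add_mem (hJz s hs) hc, by rw [add_mul]; abel⟩

theorem IsGrRegular.mul_add_mem_sup (hreg : 𝓕.IsGrRegular J z d)
    (hJz : ∀ c ∈ J, c * z ∈ J) {i : ℕ} {b c : A} (hc : c ∈ J) (ha : b * z + c ∈ 𝓕.F i) :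
    b * z + c ∈ 𝓕.boundedMultiples z d i ⊔ J.restrictScalars k := by
  obtain ⟨m, hb⟩ : ∃ m, b ∈ 𝓕.prev m :=
    let ⟨m, hm⟩ := 𝓕.exhaustive b
    ⟨m + 1, hm⟩
  induction m generalizing b c with
  | zero =>
    obtain rfl : b = 0 := by simpa only [prev_zero, Submodule.mem_bot] using hb
    rw [zero_mul, zero_add]
    exact Submodule.mem_sup_right hc
  | succ m ih =>
    rw [prev_succ] at hb
    obtain hle | hlt := le_or_gt (m + d) i
    · exact Submodule.add_mem_sup (mul_mem_boundedMultiples hb hle) hc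
    · obtain ⟨b', hb', c', hc', heq⟩ := hreg.exists_mul_add_eq hJz hb hc ha hlt
      rw [← heq] at ha ⊢
      exact ih hc' ha hb'

theorem IsGrRegular.inf_sup_span_singleton (hreg : 𝓕.IsGrRegular J z d)
    (hJz : ∀ c ∈ J, c * z ∈ J) (hz : z ∈ 𝓕.F d) (i : ℕ) :
    𝓕.F i ⊓ (Ideal.span {z} ⊔ J).restrictScalars k =
      𝓕.boundedMultiples z d i ⊔ 𝓕.F i ⊓ J.restrictScalars k := by
  have modular : 𝓕.boundedMultiples z d i ⊔ 𝓕.F i ⊓ J.restrictScalars k =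
      (𝓕.boundedMultiples z d i ⊔ J.restrictScalars k) ⊓ 𝓕.F i := by
    rw [inf_comm (𝓕.F i), sup_inf_assoc_of_le _ (boundedMultiples_le hz i)]
  rw [modular, inf_comm]
  refine le_antisymm (le_inf ?_ inf_le_right) (inf_le_inf_right _ ?_)
  · rintro a ⟨ha, haF⟩
    obtain ⟨_, hbz, c, hc, rfl⟩ := Submodule.mem_sup.1 ha
    obtain ⟨b, rfl⟩ := Ideal.mem_span_singleton'.1 hbz
    exact hreg.mul_add_mem_sup hJz hc haF
  · rw [Submodule.restrictScalars_sup]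
    exact sup_le_sup_right (boundedMultiples_le_span z d i) _

end Descent

theorem inf_span_insert_eq_boundedSpan {z : ι → A} {d : ι → ℕ} {s : Set ι} {t : ι}
    (hs : ∀ i, 𝓕.F i ⊓ (Ideal.span (z '' s)).restrictScalars k = 𝓕.boundedSpan z d s i)
    (hmul : ∀ j ∈ s, z j * z t ∈ Ideal.span (z '' s)) (hz : z t ∈ 𝓕.F (d t))
    (hreg : ∀ i, ∀ a ∈ 𝓕.F i, a * z t ∈ 𝓕.boundedSpan z d s (i + d t) ⊔ 𝓕.prev (i + d t) →
      a ∈ 𝓕.boundedSpan z d s i ⊔ 𝓕.prev i) (i : ℕ) :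
    𝓕.F i ⊓ (Ideal.span (z '' insert t s)).restrictScalars k =
      𝓕.boundedSpan z d (insert t s) i := by
  have hgr : 𝓕.IsGrRegular (Ideal.span (z '' s)) (z t) (d t) := by
    intro i a ha haz
    simp only [← hs, ← inf_sup_prev] at hreg
    exact (hreg i a ha ⟨𝓕.mul_mem ha hz, haz⟩).2
  have hJz := mul_mem_span_of_forall_mem (Set.forall_mem_image.2 hmul)
  rw [Set.image_insert_eq, Ideal.span_insert, hgr.inf_sup_span_singleton hJz hz, hs,
    boundedSpan_insert]

theorem inf_span_eq_boundedSpan {n : ℕ} {z : Fin n → A} {d : Fin n → ℕ}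
    (hmul : ∀ j l, j < l → z j * z l ∈ Ideal.span (z '' Set.Iio l))
    (hzF : ∀ j, z j ∈ 𝓕.F (d j))
    (hreg : ∀ (l : Fin n) (i : ℕ), ∀ a ∈ 𝓕.F i,
      a * z l ∈ 𝓕.symIdeal z d l (i + d l) → a ∈ 𝓕.symIdeal z d l i)
    {l : ℕ} (hl : l ≤ n) (i : ℕ) :
    𝓕.F i ⊓ (Ideal.span (z '' {j | (j : ℕ) < l})).restrictScalars k =
      𝓕.boundedSpan z d {j | (j : ℕ) < l} i := by
  induction l generalizing i with
  | zero => simp [boundedSpan_empty]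
  | succ l ih =>
    let t : Fin n := ⟨l, hl⟩
    have hset : {j : Fin n | (j : ℕ) < l + 1} = insert t {j : Fin n | (j : ℕ) < l} := by
      ext j
      simp only [Set.mem_ofPred_eq, Set.mem_insert_iff, Fin.ext_iff, t]
      omega
    rw [hset]
    exact inf_span_insert_eq_boundedSpan (ih (Nat.le_of_succ_le hl)) (fun j hj => hmul j t hj)
      (hzF t) (hreg t) i

end AlgFiltration

/-- For elements `z j` that need not be central, `(z₁, …, zₙ)` and the ideal of symbols are left
ideals. `hmul` makes right multiplication by `z l` act on `A ⧸ (A z₁ + ⋯ + A z_{l-1})`; it holds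
as soon as the `z j` commute with one another. -/
theorem gr_of_quotient_by_central_regular_general {k A : Type*} [Field k] [Ring A] [Algebra k A]
    (𝓕 : AlgFiltration k A) (n : ℕ) (z : Fin n → A) (d : Fin n → ℕ)
    (hmul : ∀ j l, j < l → z j * z l ∈ Ideal.span (z '' Set.Iio l))
    (hzF : ∀ j, z j ∈ 𝓕.F (d j))
    (hreg : ∀ (l : Fin n) (i : ℕ), ∀ a ∈ 𝓕.F i,
      a * z l ∈ 𝓕.symIdeal z d l (i + d l) → a ∈ 𝓕.symIdeal z d l i) (i : ℕ) :
    𝓕.F i ⊓ ((Ideal.span (Set.range z)).restrictScalars k ⊔ 𝓕.prev i) =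
      𝓕.symIdeal z d n i := by
  have hrange : Set.range z = z '' {j : Fin n | (j : ℕ) < n} := by simp
  rw [AlgFiltration.inf_sup_prev, hrange,
    AlgFiltration.inf_span_eq_boundedSpan hmul hzF hreg le_rfl,
    AlgFiltration.symIdeal_eq_boundedSpan_sup_prev]

/-- Let `A` be a nonnegatively filtered algebra over a field `k` with `Gr A` commutative,
and `z₁, …, zₙ` central elements of `A` (of exact filtration degrees `d₁, …, dₙ`) whose
top symbols form a regular sequence in `Gr A`.  Then
`Gr (A/(z₁, …, zₙ)) = Gr A / (Gr z₁, …, Gr zₙ)`: in each degree `i`, the part of `F i`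
dying in `Gr (A/(z))`, namely `F i ∩ ((z₁, …, zₙ) + F (i-1))`, is exactly the degree-`i`
part of the ideal of `Gr A` generated by the top symbols. -/
theorem gr_of_quotient_by_central_regular {k A : Type*} [Field k] [Ring A] [Algebra k A]
    (𝓕 : AlgFiltration k A) (hcomm : 𝓕.GrComm)
    (n : ℕ) (z : Fin n → A) (d : Fin n → ℕ)
    (hzc : ∀ (j : Fin n) (a : A), z j * a = a * z j)
    (hzF : ∀ j, z j ∈ 𝓕.F (d j)) (hzd : ∀ j, z j ∉ 𝓕.prev (d j))
    -- the top symbols `Gr z₁, …, Gr zₙ` form a regular sequence in `Gr A`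
    (hreg : ∀ (l : Fin n) (i : ℕ), ∀ a ∈ 𝓕.F i,
      a * z l ∈ 𝓕.symIdeal z d l (i + d l) → a ∈ 𝓕.symIdeal z d l i) :
    ∀ i : ℕ, 𝓕.F i ⊓ ((Ideal.span (Set.range z)).restrictScalars k ⊔ 𝓕.prev i) =
      𝓕.symIdeal z d n i :=
  gr_of_quotient_by_central_regular_general 𝓕 n z d
    (fun j l hjl => hzc j (z l) ▸ Ideal.mul_mem_left _ _ (Ideal.subset_span ⟨j, hjl, rfl⟩)) hzF hreg
end

section
/- Every finitely generated projective module over a polynomial ring k[x_1,...,x_n] over a field k is free (Quillen–Suslin theorem). -/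
/-!
Induct on the number of variables, writing `R = A[X]` with `A` a polynomial ring in one variable
less. A change of variables makes any given nonzero element of `R` monic in `X`, up to a unit.

By Horrocks' theorem, a unimodular vector over `A[X]` with a monic entry is equivalent to a standard
basis vector when `A` is local. By Quillen's patching, it is therefore equivalent to its value at
`X = 0` over any domain `A`. Hence `R` is a Hermite ring, so that stably free modules are free.

To see that a projective `R`-module `M` is stably free, choose a free submodule `F` such that a
monic `g` kills `K = M / F`. Then `K` is finite projective, hence free, over `A`, and the
characteristic sequence `0 → K[X] → K[X] → K → 0` of the operator `X` on `K` is a second free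
resolution of `K`. Schanuel's lemma gives `M ⊕ K[X] ≃ F ⊕ K[X]`.
-/

open Polynomial
open scoped Matrix

lemma ringHom_comp_single_one {ι R S : Type*} [DecidableEq ι] [CommRing R] [CommRing S]
    (f : R →+* S) (i : ι) : f ∘ Pi.single i 1 = Pi.single i 1 := by
  ext j
  simp [Pi.single_apply, apply_ite f]

lemma mulVec_map_comp {ι R S : Type*} [Fintype ι] [DecidableEq ι] [CommRing R] [CommRing S]
    (f : R →+* S) (g : GL ι R) (v : ι → R) :
    (Matrix.GeneralLinearGroup.map f g).val *ᵥ (f ∘ v) = f ∘ (g.val *ᵥ v) :=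
  funext fun i ↦ (f.map_mulVec g.val v i).symm

section Unimodular

variable {ι R S : Type*} [Fintype ι] [CommRing R] [CommRing S]

/-- Unimodular vectors: those whose entries generate the unit ideal, witnessed by a vector of
coefficients. -/
def IsUnimodular (v : ι → R) : Prop := ∃ a : ι → R, a ⬝ᵥ v = 1

namespace IsUnimodular

lemma map (f : R →+* S) {v : ι → R} (hv : IsUnimodular v) : IsUnimodular (f ∘ v) := by
  obtain ⟨a, ha⟩ := hv
  exact ⟨f ∘ a, by rw [← RingHom.map_dotProduct, ha, map_one]⟩

lemma exists_ne_zero [Nontrivial R] {v : ι → R} (hv : IsUnimodular v) : ∃ i, v i ≠ 0 := by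
  obtain ⟨a, ha⟩ := hv
  by_contra! h
  simp [dotProduct, h] at ha

lemma exists_isUnit [IsLocalRing R] {v : ι → R} (hv : IsUnimodular v) : ∃ i, IsUnit (v i) := by
  obtain ⟨a, ha⟩ := hv
  by_contra! h
  have : a ⬝ᵥ v ∈ IsLocalRing.maximalIdeal R :=
    Ideal.sum_mem _ fun i _ ↦ Ideal.mul_mem_left _ _ (h i)
  exact (Ideal.ne_top_iff_one _).mp (IsLocalRing.maximalIdeal.isMaximal R).ne_top (ha ▸ this)

end IsUnimodular

variable [DecidableEq ι]

/-- Two vectors are `GL`-equivalent if they lie in one orbit of the general linear group. -/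
def GLEquivalent (v w : ι → R) : Prop := ∃ g : GL ι R, g.val *ᵥ v = w

namespace GLEquivalent

variable {u v w : ι → R}

lemma refl (v : ι → R) : GLEquivalent v v := ⟨1, by simp⟩

lemma trans (h : GLEquivalent u v) (h' : GLEquivalent v w) : GLEquivalent u w := by
  obtain ⟨g, rfl⟩ := h
  obtain ⟨g', rfl⟩ := h'
  exact ⟨g' * g, by rw [Units.val_mul, Matrix.mulVec_mulVec]⟩

lemma map (f : R →+* S) (h : GLEquivalent v w) : GLEquivalent (f ∘ v) (f ∘ w) := by
  obtain ⟨g, rfl⟩ := h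
  exact ⟨Matrix.GeneralLinearGroup.map f g, mulVec_map_comp f g v⟩

lemma map_comp {T : Type*} [CommRing T] {g g' : R →+* S} (h : GLEquivalent (g ∘ v) (g' ∘ v))
    (f : S →+* T) : GLEquivalent (f.comp g ∘ v) (f.comp g' ∘ v) := h.map f

lemma of_ringEquiv (e : R ≃+* S) (h : GLEquivalent (e ∘ v) (e ∘ w)) : GLEquivalent v w := by
  simpa [Function.comp_def] using h.map (e.symm : S →+* R)

lemma isUnimodular (h : GLEquivalent v w) (hv : IsUnimodular v) : IsUnimodular w := by
  obtain ⟨g, rfl⟩ := h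
  obtain ⟨a, ha⟩ := hv
  refine ⟨a ᵥ* (g⁻¹).val, ?_⟩
  rw [← Matrix.dotProduct_mulVec, Matrix.mulVec_mulVec, Units.inv_mul, Matrix.one_mulVec, ha]

lemma units_smul (a : Rˣ) (v : ι → R) : GLEquivalent v (a • v) :=
  ⟨Matrix.GeneralLinearGroup.scalar ι a, by
    ext i; simp [Matrix.mulVec_diagonal, Units.smul_def]⟩

lemma add_dotProduct_smul (v c u : ι → R) (h : u ⬝ᵥ c = 0) :
    GLEquivalent v (v + (u ⬝ᵥ v) • c) := by
  have hsq : Matrix.vecMulVec c u * Matrix.vecMulVec c u = 0 := by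
    rw [Matrix.vecMulVec_mul_vecMulVec, h, zero_smul, Matrix.vecMulVec_zero]
  refine ⟨⟨1 + Matrix.vecMulVec c u, 1 - Matrix.vecMulVec c u, ?_, ?_⟩, ?_⟩
  · rw [mul_sub, mul_one, add_mul, hsq]; simp
  · rw [sub_mul, one_mul, mul_add, hsq]; simp
  · rw [Matrix.add_mulVec, Matrix.one_mulVec, Matrix.vecMulVec_mulVec, op_smul_eq_smul]

lemma single_of_eq_one {i : ι} (h : v i = 1) : GLEquivalent v (Pi.single i 1) := by
  convert add_dotProduct_smul v (Pi.single i 1 - v) (Pi.single i 1) (by simp [h]) using 1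
  rw [single_dotProduct, one_mul, h, one_smul, add_sub_cancel]

lemma single_of_isUnit {i : ι} (h : IsUnit (v i)) : GLEquivalent v (Pi.single i 1) :=
  (units_smul h.unit⁻¹ v).trans (single_of_eq_one (by simp [Units.smul_def]))

lemma update_add_dotProduct (v : ι → R) {i : ι} (u : ι → R) (hu : u i = 0) :
    GLEquivalent v (Function.update v i (v i + u ⬝ᵥ v)) := by
  convert add_dotProduct_smul v (Pi.single i 1) u (by simp [hu]) using 1
  ext j
  rcases eq_or_ne j i with rfl | h <;> simp [*]

lemma update_add_of_mem_span_pair (v : ι → R) {i j l : ι} (hi : l ≠ i) (hj : l ≠ j) {a : R}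
    (ha : a ∈ Ideal.span {v i, v j}) : GLEquivalent v (Function.update v l (v l + a)) := by
  obtain ⟨x, y, rfl⟩ := Ideal.mem_span_pair.mp ha
  convert update_add_dotProduct v (Pi.single i x + Pi.single j y) (i := l) (by simp [hi, hj])
  rw [add_dotProduct, single_dotProduct, single_dotProduct]

lemma single_zero_of_isUnimodular_fin_two {v : Fin 2 → R} (hv : IsUnimodular v) :
    GLEquivalent v (Pi.single 0 1) := by
  obtain ⟨a, ha⟩ := hv
  rw [dotProduct, Fin.sum_univ_two] at ha
  have hdet : !![a 0, a 1; -v 1, v 0].det = 1 := by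
    rw [Matrix.det_fin_two_of]
    linear_combination ha
  refine ⟨Matrix.SpecialLinearGroup.toGL ⟨_, hdet⟩, ?_⟩
  change !![a 0, a 1; -v 1, v 0] *ᵥ v = Pi.single 0 1
  ext i
  fin_cases i
  · simpa [Matrix.mulVec, dotProduct] using ha
  · simp [Matrix.mulVec, dotProduct, mul_comm]

end GLEquivalent

end Unimodular

section Hermite

variable {R : Type*} [CommRing R]

variable (R) in
/-- Hermite rings in the sense of Lam: every unimodular vector can be moved to a standard basis
vector by an invertible matrix, that is, it is a column of an invertible matrix. -/
def IsHermite : Prop :=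
  ∀ ⦃m : ℕ⦄ ⦃v : Fin m → R⦄, IsUnimodular v → ∃ i, GLEquivalent v (Pi.single i 1)

namespace IsHermite

lemma of_ringEquiv {S : Type*} [CommRing S] (hR : IsHermite R) (e : R ≃+* S) : IsHermite S := by
  intro m v hv
  obtain ⟨i, hi⟩ := hR (hv.map (e.symm : S →+* R))
  rw [← ringHom_comp_single_one (e.symm : S →+* R)] at hi
  exact ⟨i, .of_ringEquiv e.symm hi⟩

lemma of_isLocalRing [IsLocalRing R] : IsHermite R := fun _ _ hv ↦
  hv.exists_isUnit.imp fun _ ↦ GLEquivalent.single_of_isUnit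

lemma of_forall_two_lt [Nontrivial R] (h : ∀ ⦃m : ℕ⦄, 2 < m → ∀ ⦃v : Fin m → R⦄,
    IsUnimodular v → ∃ i, GLEquivalent v (Pi.single i 1)) : IsHermite R
  | 0, _, hv => hv.exists_ne_zero.elim fun i _ ↦ i.elim0
  | 1, _, ⟨a, ha⟩ => ⟨0, .single_of_isUnit <|
      .of_mul_eq_one_right (a 0) (by simpa [dotProduct] using ha)⟩
  | 2, _, hv => ⟨0, .single_zero_of_isUnimodular_fin_two hv⟩
  | _ + 3, _, hv => h (by lia) hv

end IsHermite

end Hermite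

section Horrocks

variable {ι A : Type*} [Fintype ι] [CommRing A]

lemma coeff_mem_leadingCoeffNth {I : Ideal A[X]} {f : A[X]} (hf : f.Monic) (hfI : f ∈ I) {d : ℕ}
    (hd : f.natDegree = d + 1) {p : A[X]} (hpI : p ∈ I) (hpd : p.natDegree ≤ d) (i : ℕ) :
    p.coeff i ∈ I.leadingCoeffNth d := by
  have top_coeff {q : A[X]} (hqI : q ∈ I) (hqd : q.natDegree ≤ d) :
      q.coeff d ∈ I.leadingCoeffNth d :=
    ⟨q, ⟨mem_degreeLE.mpr (natDegree_le_iff_degree_le.mp hqd), hqI⟩, rfl⟩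
  rcases lt_or_ge d i with hi | hi
  · rw [coeff_eq_zero_of_natDegree_lt (hpd.trans_lt hi)]
    exact zero_mem _
  induction hi using Nat.decreasingInduction generalizing p with
  | self => exact top_coeff hpI hpd
  | of_succ i _ ih =>
    set q := X * p - C (p.coeff d) * f with hq
    have hqI : q ∈ I := sub_mem (I.mul_mem_left _ hpI) (I.mul_mem_left _ hfI)
    have hqd : q.natDegree ≤ d := by
      refine natDegree_le_iff_coeff_eq_zero.mpr fun n hn ↦ ?_
      obtain ⟨n, rfl⟩ := Nat.exists_eq_add_one_of_ne_zero hn.ne_bot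
      rw [hq, coeff_sub, coeff_X_mul, coeff_C_mul, sub_eq_zero]
      rcases eq_or_ne n d with rfl | hnd
      · rw [← hd, hf.coeff_natDegree, mul_one]
      · rw [coeff_eq_zero_of_natDegree_lt (by lia), coeff_eq_zero_of_natDegree_lt (p := f) (by lia),
          mul_zero]
    have hpi : p.coeff i = q.coeff (i + 1) + p.coeff d * f.coeff (i + 1) := by
      rw [hq, coeff_sub, coeff_X_mul, coeff_C_mul, sub_add_cancel]
    rw [hpi]
    exact add_mem (ih hqI hqd) (Ideal.mul_mem_right _ _ (top_coeff hpI hpd))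

lemma exists_mem_natDegree_le_coeff_eq {I : Ideal A[X]} {f : A[X]} (hf : f.Monic) (hfI : f ∈ I)
    {d : ℕ} (hd : f.natDegree = d + 1) {p : A[X]} (hpI : p ∈ I) (hpd : p.natDegree ≤ d) {i : ℕ}
    (hi : IsUnit (p.coeff i)) (c : A) : ∃ q ∈ I, q.natDegree ≤ d ∧ q.coeff d = c := by
  have htop : I.leadingCoeffNth d = ⊤ :=
    Ideal.eq_top_of_isUnit_mem _ (coeff_mem_leadingCoeffNth hf hfI hd hpI hpd i) hi
  obtain ⟨q, ⟨hqd, hqI⟩, hqc⟩ : c ∈ I.leadingCoeffNth d := htop ▸ Submodule.mem_top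
  exact ⟨q, hqI, natDegree_le_iff_degree_le.mpr (mem_degreeLE.mp hqd), hqc⟩

lemma IsUnimodular.exists_isUnit_coeff [IsLocalRing A] {v : ι → A[X]} (hv : IsUnimodular v) {i : ι}
    (hi : (v i).Monic) (hd : (v i).natDegree ≠ 0) : ∃ j ≠ i, ∃ m, IsUnit ((v j).coeff m) := by
  by_contra! hcon
  let φ := mapRingHom (IsLocalRing.residue A)
  have hφ : ∀ j ≠ i, φ (v j) = 0 := fun j hj ↦ by
    ext m
    simpa [φ, IsLocalRing.residue_eq_zero_iff] using hcon j hj m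
  obtain ⟨a, ha⟩ := hv.map φ
  have hunit : IsUnit (φ (v i)) := by
    refine .of_mul_eq_one_right (a i) ?_
    rw [← ha, dotProduct, Fintype.sum_eq_single i fun j hj ↦ by simp [hφ j hj], Function.comp_apply]
  refine hd ?_
  rw [← hi.natDegree_map (IsLocalRing.residue A)]
  exact natDegree_eq_zero_of_isUnit hunit

variable [DecidableEq ι]

lemma exists_glEquivalent_natDegree_lt (v : ι → A[X]) {i : ι} (hi : (v i).Monic)
    (hd : (v i).natDegree ≠ 0) :
    ∃ w, GLEquivalent v w ∧ w i = v i ∧ ∀ j ≠ i, (w j).natDegree < (v i).natDegree := by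
  let c : ι → A[X] := Function.update (fun j ↦ -(v j /ₘ v i)) i 0
  set w := v + (Pi.single i 1 ⬝ᵥ v) • c with hw
  refine ⟨w, .add_dotProduct_smul v c (Pi.single i 1) (by simp [c]), by simp [hw, c], fun j hj ↦ ?_⟩
  have hwj : w j = v j %ₘ v i := by
    simp [hw, c, hj, modByMonic_eq_sub_mul_div, sub_eq_add_neg]
  rw [hwj]
  exact natDegree_modByMonic_lt (v j) hi fun h ↦ hd (h ▸ natDegree_one)

lemma exists_glEquivalent_monic_natDegree_eq [IsLocalRing A] (hι : 2 < Fintype.card ι)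
    {v : ι → A[X]} (hv : IsUnimodular v) {i : ι} (hi : (v i).Monic) {d : ℕ}
    (hd : (v i).natDegree = d + 1) :
    ∃ w, GLEquivalent v w ∧ ∃ l, (w l).Monic ∧ (w l).natDegree = d := by
  obtain ⟨w, hvw, hwi, hw⟩ := exists_glEquivalent_natDegree_lt v hi (by lia)
  rw [← hwi] at hi hd
  simp only [← hwi, hd, Nat.lt_succ_iff] at hw
  obtain ⟨j, hji, m, hm⟩ := (hvw.isUnimodular hv).exists_isUnit_coeff hi (by lia)
  obtain ⟨l, -, hl⟩ : ∃ l ∈ Finset.univ, l ∉ ({i, j} : Finset ι) :=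
    Finset.exists_mem_notMem_of_card_lt_card (Finset.card_le_two.trans_lt hι)
  rw [Finset.mem_insert, Finset.mem_singleton, not_or] at hl
  obtain ⟨p, hp, hpd, hpc⟩ := exists_mem_natDegree_le_coeff_eq (I := .span {w i, w j}) hi
    (Ideal.subset_span (by simp)) hd (Ideal.subset_span (by simp)) (hw j hji) hm
    (1 - (w l).coeff d)
  refine ⟨_, hvw.trans (.update_add_of_mem_span_pair w hl.1 hl.2 hp), l, ?_⟩
  rw [Function.update_self]
  have hdeg : (w l + p).natDegree ≤ d := natDegree_add_le_of_degree_le (hw l hl.1) hpd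
  have hcoeff : (w l + p).coeff d = 1 := by rw [coeff_add, hpc, add_sub_cancel]
  exact ⟨monic_of_natDegree_le_of_coeff_eq_one d hdeg hcoeff,
    natDegree_eq_of_le_of_coeff_ne_zero hdeg (hcoeff ▸ one_ne_zero)⟩

lemma exists_glEquivalent_single_of_monic [IsLocalRing A] (hι : 2 < Fintype.card ι) {v : ι → A[X]}
    (hv : IsUnimodular v) {i : ι} (hi : (v i).Monic) : ∃ j, GLEquivalent v (Pi.single j 1) := by
  induction hd : (v i).natDegree generalizing v i with
  | zero => exact ⟨i, .single_of_eq_one (hi.natDegree_eq_zero.mp hd)⟩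
  | succ d ih =>
    obtain ⟨w, hvw, l, hl, hld⟩ := exists_glEquivalent_monic_natDegree_eq hι hv hi hd
    exact (ih (hvw.isUnimodular hv) hl hld).imp fun _ ↦ hvw.trans

end Horrocks

section Patching

variable {ι R L : Type*} [CommRing R] [CommRing L]

lemma exists_mem_forall_comp_C_mul_X_mem_range [Algebra R L] (S : Submonoid R) [IsLocalization S L]
    {κ : Type*} [Finite κ] (g : κ → L[X]) (hg : ∀ i, (g i).coeff 0 ∈ (algebraMap R L).range) :
    ∃ c ∈ S, ∀ i, (g i).comp (C (algebraMap R L c) * X) ∈ (mapRingHom (algebraMap R L)).range := by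
  classical
  have := Fintype.ofFinite κ
  obtain ⟨⟨c, hc⟩, h⟩ := IsLocalization.exist_integer_multiples_of_finset S
    (Finset.univ.biUnion fun i ↦ (g i).coeffs)
  refine ⟨c, hc, fun i ↦ (lifts_iff_liftsRing _ _).mp ((lifts_iff_coeff_lifts _).mpr fun n ↦ ?_)⟩
  rw [comp_C_mul_X_coeff]
  rcases n with _ | n
  · simpa using hg i
  by_cases hn : (g i).coeff (n + 1) = 0
  · exact ⟨0, by simp [hn]⟩
  obtain ⟨q, hq⟩ := h _ (Finset.mem_biUnion.mpr ⟨i, Finset.mem_univ i, coeff_mem_coeffs hn⟩)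
  refine ⟨q * c ^ n, ?_⟩
  rw [map_mul, hq, Algebra.smul_def, map_pow]
  ring

variable [Fintype ι] [DecidableEq ι]

lemma exists_generalLinearGroup_map_eq {f : R →+* L} (hf : Function.Injective f) (G : GL ι L)
    (hG : ∀ i j, G i j ∈ f.range) (hG' : ∀ i j, G⁻¹ i j ∈ f.range) :
    ∃ H : GL ι R, Matrix.GeneralLinearGroup.map f H = G := by
  choose H hH using hG
  choose H' hH' using hG'
  have hinj : Function.Injective (f.mapMatrix : Matrix ι ι R →+* Matrix ι ι L) :=
    Matrix.map_injective hf
  have hHG : f.mapMatrix (Matrix.of H) = G.val := Matrix.ext hH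
  have hHG' : f.mapMatrix (Matrix.of H') = G⁻¹.val := Matrix.ext hH'
  refine ⟨⟨Matrix.of H, Matrix.of H', hinj ?_, hinj ?_⟩, Units.ext hHG⟩
  · rw [map_mul, map_one, hHG, hHG', Units.mul_inv]
  · rw [map_mul, map_one, hHG, hHG', Units.inv_mul]

lemma exists_generalLinearGroup_map_eq_map_comp_C_mul_X [Algebra R L] (S : Submonoid R)
    [IsLocalization S L] (hinj : Function.Injective (algebraMap R L)) (G : GL ι L[X])
    (hG : Matrix.GeneralLinearGroup.map constantCoeff G = 1) :
    ∃ c ∈ S, ∃ H : GL ι R[X], Matrix.GeneralLinearGroup.map (mapRingHom (algebraMap R L)) H =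
      Matrix.GeneralLinearGroup.map (compRingHom (C (algebraMap R L c) * X)) G := by
  have coeff_zero_mem {P : GL ι L[X]} (hP : Matrix.GeneralLinearGroup.map constantCoeff P = 1)
      (i j) : (P i j).coeff 0 ∈ (algebraMap R L).range := by
    have hPij : (P i j).coeff 0 = (1 : GL ι L) i j := congr($hP i j)
    rw [hPij, Matrix.GeneralLinearGroup.coe_one, Matrix.one_apply]
    split_ifs
    exacts [one_mem _, zero_mem _]
  obtain ⟨c, hc, h⟩ := exists_mem_forall_comp_C_mul_X_mem_range S
    (Sum.elim (fun p : ι × ι ↦ G p.1 p.2) fun p : ι × ι ↦ G⁻¹ p.1 p.2) <| by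
      rintro (p | p)
      exacts [coeff_zero_mem hG .., coeff_zero_mem (by rw [map_inv, hG, inv_one]) ..]
  exact ⟨c, hc, exists_generalLinearGroup_map_eq (map_injective _ hinj) _
    (fun i j ↦ h (.inl (i, j))) fun i j ↦ by rw [← map_inv]; exact h (.inr (i, j))⟩

/-- The substitution `f(X) ↦ f(X + cY)`, where `Y` is the outer variable of `R[X][Y]`. -/
noncomputable def shiftHom (c : R) : R[X] →+* R[X][X] :=
  eval₂RingHom (C.comp C) (C X + C (C c) * X)

/-- Quillen's patching ideal of a vector `v` over `R[X]`: the set of `c` for which `v(X + cY)` and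
`v(X)` are equivalent over `R[X][Y]`, where `Y` is the outer variable. -/
noncomputable def patchingIdeal (v : ι → R[X]) : Ideal R where
  carrier := {c | GLEquivalent (shiftHom c ∘ v) (C ∘ v)}
  zero_mem' := by
    have h : shiftHom (0 : R) = C := by ext <;> simp [shiftHom]
    change GLEquivalent (shiftHom 0 ∘ v) (C ∘ v)
    rw [h]
    exact .refl _
  add_mem' {c d} hc hd := by
    let f : R[X][X] →+* R[X][X] := eval₂RingHom (shiftHom c) X
    have hfd : f.comp (shiftHom d) = shiftHom (c + d) := by
      ext <;> simp [f, shiftHom, add_mul, add_assoc]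
    have hfC : f.comp C = shiftHom c := by ext <;> simp [f]
    have := hd.map_comp f
    rw [hfd, hfC] at this
    exact this.trans hc
  smul_mem' b {c} hc := by
    let f : R[X][X] →+* R[X][X] := eval₂RingHom C (C (C b) * X)
    have hfc : f.comp (shiftHom c) = shiftHom (b • c) := by
      ext <;> simp [f, shiftHom, mul_left_comm, mul_assoc]
    have hfC : f.comp C = C := by ext <;> simp [f]
    have := hc.map_comp f
    rwa [hfc, hfC] at this

lemma exists_mulVec_shiftHom_one_comp_eq {v : ι → R[X]} {w : ι → R}
    (h : GLEquivalent v (C ∘ w)) : ∃ G : GL ι R[X][X],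
      Matrix.GeneralLinearGroup.map constantCoeff G = 1 ∧ G.val *ᵥ (shiftHom 1 ∘ v) = C ∘ v := by
  obtain ⟨g, hg⟩ := h
  let g₀ : GL ι R[X][X] := Matrix.GeneralLinearGroup.map C g
  let g₁ : GL ι R[X][X] := Matrix.GeneralLinearGroup.map (shiftHom 1) g
  refine ⟨g₀⁻¹ * g₁, ?_, ?_⟩
  · have hC : constantCoeff.comp C = RingHom.id R[X] := by ext <;> simp
    have hshift : constantCoeff.comp (shiftHom 1) = RingHom.id R[X] := by ext <;> simp [shiftHom]
    simp only [g₀, g₁, map_mul, map_inv, ← MonoidHom.comp_apply,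
      ← Matrix.GeneralLinearGroup.map_comp, hC, hshift, inv_mul_cancel]
  · have hw : shiftHom 1 ∘ C ∘ w = C ∘ C ∘ w := by
      ext1 i
      simp [shiftHom]
    rw [Units.val_mul, ← Matrix.mulVec_mulVec, mulVec_map_comp, hg, hw, ← hg, ← mulVec_map_comp,
      Matrix.mulVec_mulVec, Units.inv_mul, Matrix.one_mulVec]

attribute [local instance] Polynomial.algebra in
lemma exists_mem_patchingIdeal [Algebra R L] (S : Submonoid R) [IsLocalization S L]
    (hinj : Function.Injective (algebraMap R L)) {v : ι → R[X]} {w : ι → L}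
    (h : GLEquivalent (mapRingHom (algebraMap R L) ∘ v) (C ∘ w)) :
    ∃ c ∈ S, c ∈ patchingIdeal v := by
  set ψ := mapRingHom (algebraMap R L)
  obtain ⟨G, hG, hGv⟩ := exists_mulVec_shiftHom_one_comp_eq h
  have := Polynomial.isLocalization S L
  obtain ⟨_, ⟨c, hc, rfl⟩, H, hH⟩ :=
    exists_generalLinearGroup_map_eq_map_comp_C_mul_X (S.map C) (map_injective _ hinj) G hG
  set θ : L[X][X] →+* L[X][X] := compRingHom (C (ψ (C c)) * X)
  replace hH : Matrix.GeneralLinearGroup.map (mapRingHom ψ) H =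
    Matrix.GeneralLinearGroup.map θ G := hH
  have hshift : (mapRingHom ψ).comp (shiftHom c) = θ.comp ((shiftHom 1).comp ψ) := by
    ext <;> simp [shiftHom, θ, ψ]
  have hC : θ.comp (C.comp ψ) = (mapRingHom ψ).comp C := by ext <;> simp [θ, ψ]
  refine ⟨c, hc, H, (map_injective ψ (map_injective _ hinj)).comp_left ?_⟩
  calc mapRingHom ψ ∘ (H.val *ᵥ (shiftHom c ∘ v))
      = (Matrix.GeneralLinearGroup.map θ G).val *ᵥ (θ ∘ shiftHom 1 ∘ ψ ∘ v) := by
        rw [← mulVec_map_comp, hH]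
        exact congr(_ *ᵥ ($hshift ∘ v))
    _ = θ ∘ C ∘ ψ ∘ v := by rw [mulVec_map_comp, hGv]
    _ = mapRingHom ψ ∘ C ∘ v := congr($hC ∘ v)

lemma patchingIdeal_eq_top [IsDomain R] (hι : 2 < Fintype.card ι) {v : ι → R[X]}
    (hv : IsUnimodular v) {i : ι} (hi : (v i).Monic) : patchingIdeal v = ⊤ := by
  by_contra hne
  obtain ⟨p, hp, hle⟩ := (patchingIdeal v).exists_le_maximal hne
  let L := Localization.AtPrime p
  obtain ⟨j, hj⟩ := exists_glEquivalent_single_of_monic hι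
    (hv.map (mapRingHom (algebraMap R L))) (hi.map (algebraMap R L))
  rw [← ringHom_comp_single_one (C : L →+* L[X])] at hj
  obtain ⟨c, hc, hcv⟩ := exists_mem_patchingIdeal p.primeCompl
    (IsLocalization.injective L p.primeCompl_le_nonZeroDivisors) hj
  exact hc (hle hcv)

lemma glEquivalent_C_eval_zero_of_monic [IsDomain R] (hι : 2 < Fintype.card ι) {v : ι → R[X]}
    (hv : IsUnimodular v) {i : ι} (hi : (v i).Monic) :
    GLEquivalent v (C ∘ evalRingHom 0 ∘ v) := by
  let f : R[X][X] →+* R[X] := eval₂RingHom (C.comp (evalRingHom 0)) X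
  have hf : f.comp (shiftHom 1) = RingHom.id _ := by ext <;> simp [f, shiftHom]
  have hfC : f.comp C = C.comp (evalRingHom 0) := by ext <;> simp [f]
  have h1 : (1 : R) ∈ patchingIdeal v :=
    (Ideal.eq_top_iff_one _).mp (patchingIdeal_eq_top hι hv hi)
  have := h1.map_comp f
  rwa [hf, hfC] at this

end Patching

section HermitePolynomial

variable {A R : Type*} [CommRing A] [CommRing R]

lemma exists_units_monic_smul {f : A[X]} (hf : IsUnit f.leadingCoeff) :
    ∃ u : A[X]ˣ, (u • f).Monic := by
  obtain ⟨c, hc⟩ := hf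
  refine ⟨Units.map (C : A →+* A[X]) c⁻¹, ?_⟩
  exact monic_C_mul_of_mul_leadingCoeff_eq_one (by simp [← hc])

variable [IsDomain A]

lemma IsHermite.exists_glEquivalent_single_of_isUnit_leadingCoeff (hA : IsHermite A) {m : ℕ}
    (hm : 2 < m) {v : Fin m → A[X]} (hv : IsUnimodular v) {i : Fin m}
    (hi : IsUnit (v i).leadingCoeff) : ∃ j, GLEquivalent v (Pi.single j 1) := by
  obtain ⟨u, hmonic⟩ := exists_units_monic_smul hi
  have hu : GLEquivalent v (u • v) := .units_smul u v
  have hu' := hu.isUnimodular hv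
  obtain ⟨j, hj⟩ := hA (hu'.map (evalRingHom 0))
  have := hj.map (C : A →+* A[X])
  rw [ringHom_comp_single_one] at this
  exact ⟨j, (hu.trans (glEquivalent_C_eval_zero_of_monic (by simpa) hu' hmonic)).trans this⟩

lemma IsHermite.of_forall_exists_ringEquiv [Nontrivial R] (hA : IsHermite A)
    (h : ∀ f : R, f ≠ 0 → ∃ e : R ≃+* A[X], IsUnit (e f).leadingCoeff) : IsHermite R :=
  .of_forall_two_lt fun _ hm v hv ↦ by
    obtain ⟨i, hi⟩ := hv.exists_ne_zero
    obtain ⟨e, he⟩ := h _ hi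
    obtain ⟨j, hj⟩ := hA.exists_glEquivalent_single_of_isUnit_leadingCoeff hm
      (hv.map (e : R →+* A[X])) he
    rw [← ringHom_comp_single_one (e : R →+* A[X])] at hj
    exact ⟨j, .of_ringEquiv e hj⟩

end HermitePolynomial

section ChangeOfVariables

variable {R : Type*} [CommRing R]

/-- The change of variables `f(X, Y) ↦ f(Y, X + Y ^ N)` of `R[X][Y]`, which for large `N` turns the
leading monomial for the lexicographic order into a leading term in the outer variable. -/
noncomputable def nagataEquiv (R : Type*) [CommRing R] (N : ℕ) : R[X][X] ≃+* R[X][X] :=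
  (algEquivAevalXAddC (X ^ N : R[X])).toRingEquiv.trans Bivariate.swap.toRingEquiv

lemma nagataEquiv_monomial (N i : ℕ) (a : R[X]) :
    nagataEquiv R N (monomial i a) = a.map C * (X ^ N + C X) ^ i := by
  rw [← C_mul_X_pow_eq_monomial, map_mul, map_pow]
  simp [nagataEquiv, Bivariate.swap_C, Bivariate.swap_Y, add_comm]

lemma degree_nagataEquiv_monomial [Nontrivial R] {N : ℕ} (hN : N ≠ 0) (i : ℕ) (a : R[X]) :
    (nagataEquiv R N (monomial i a)).degree = a.degree + (i * N : ℕ) := by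
  have hmonic : (X ^ N + C X : R[X][X]).Monic := monic_X_pow_add_C X hN
  rw [nagataEquiv_monomial, (hmonic.pow i).degree_mul, degree_map_eq_of_injective C_injective,
    degree_eq_natDegree (hmonic.pow i).ne_zero, hmonic.natDegree_pow, natDegree_X_pow_add_C]

lemma leadingCoeff_nagataEquiv_monomial {N : ℕ} (hN : N ≠ 0) (i : ℕ) (a : R[X]) :
    (nagataEquiv R N (monomial i a)).leadingCoeff = C a.leadingCoeff := by
  rw [nagataEquiv_monomial, leadingCoeff_mul_monic ((monic_X_pow_add_C X hN).pow i),
    leadingCoeff_map_of_injective C_injective]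

lemma degree_nagataEquiv_lt [Nontrivial R] {N : ℕ} (hN : N ≠ 0) {f : R[X][X]} {d : ℕ}
    (hf : f.degree < d) (hfN : ∀ i, (f.coeff i).natDegree < N) :
    (nagataEquiv R N f).degree < (d * N : ℕ) := by
  rw [f.as_sum_support, map_sum, ← mem_degreeLT]
  refine Submodule.sum_mem _ fun i hi ↦ mem_degreeLT.mpr ?_
  have hid : i < d := by exact_mod_cast (le_degree_of_mem_supp i hi).trans_lt hf
  have hiN : (f.coeff i).degree < N := degree_le_natDegree.trans_lt (by exact_mod_cast hfN i)
  rw [degree_nagataEquiv_monomial hN]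
  calc (f.coeff i).degree + (i * N : ℕ) < N + (i * N : ℕ) :=
        WithBot.add_lt_add_right WithBot.coe_ne_bot hiN
    _ = ((i + 1) * N : ℕ) := by
      push_cast
      ring
    _ ≤ (d * N : ℕ) := by exact_mod_cast Nat.mul_le_mul_right N hid

lemma leadingCoeff_nagataEquiv {N : ℕ} {f : R[X][X]} (hfN : ∀ i, (f.coeff i).natDegree < N) :
    (nagataEquiv R N f).leadingCoeff = C f.leadingCoeff.leadingCoeff := by
  rcases eq_or_ne f 0 with rfl | hf
  · simp
  have hf' : f.leadingCoeff ≠ 0 := leadingCoeff_ne_zero.mpr hf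
  have : Nontrivial R := ⟨_, _, leadingCoeff_ne_zero.mpr hf'⟩
  have hN : N ≠ 0 := (hfN 0).ne_bot
  conv_lhs => rw [← f.eraseLead_add_monomial_natDegree_leadingCoeff, map_add]
  rw [leadingCoeff_add_of_degree_lt, leadingCoeff_nagataEquiv_monomial hN]
  calc (nagataEquiv R N f.eraseLead).degree < (f.natDegree * N : ℕ) := by
        refine degree_nagataEquiv_lt hN
          ((degree_eraseLead_lt hf).trans_eq (degree_eq_natDegree hf)) fun i ↦ ?_
        rw [eraseLead_coeff]
        split_ifs
        exacts [hN.pos, hfN i]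
    _ ≤ (nagataEquiv R N (monomial f.natDegree f.leadingCoeff)).degree := by
        rw [degree_nagataEquiv_monomial hN, degree_eq_natDegree hf']
        exact_mod_cast Nat.le_add_left ..

lemma exists_leadingCoeff_nagataEquiv_eq (f : R[X][X]) :
    ∃ N, (nagataEquiv R N f).leadingCoeff = C f.leadingCoeff.leadingCoeff := by
  refine ⟨f.support.sup (fun i ↦ (f.coeff i).natDegree) + 1, leadingCoeff_nagataEquiv fun i ↦ ?_⟩
  rw [Nat.lt_succ_iff]
  by_cases hi : i ∈ f.support
  · exact Finset.le_sup (f := fun i ↦ (f.coeff i).natDegree) hi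
  · simp [notMem_support_iff.mp hi]

lemma exists_ringEquiv_isUnit_leadingCoeff {k : Type*} [Field k] {n : ℕ}
    {f : MvPolynomial (Fin (n + 1)) k} (hf : f ≠ 0) :
    ∃ e : MvPolynomial (Fin (n + 1)) k ≃+* (MvPolynomial (Fin n) k)[X],
      IsUnit (e f).leadingCoeff := by
  induction n with
  | zero =>
    refine ⟨(MvPolynomial.finSuccEquiv k 0).toRingEquiv, ?_⟩
    rw [← isUnit_map_iff (MvPolynomial.isEmptyAlgEquiv k (Fin 0)), isUnit_iff_ne_zero,
      EmbeddingLike.map_ne_zero_iff, leadingCoeff_ne_zero]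
    simpa
  | succ n ih =>
    let g := MvPolynomial.finSuccEquiv k (n + 1) f
    have hg : g.leadingCoeff ≠ 0 := by simpa [g]
    obtain ⟨e, he⟩ := ih hg
    obtain ⟨N, hN⟩ := exists_leadingCoeff_nagataEquiv_eq (mapEquiv e g)
    rw [mapEquiv_apply, leadingCoeff_map_of_injective e.injective] at hN
    let e' : (MvPolynomial (Fin n) k)[X] ≃+* MvPolynomial (Fin (n + 1)) k :=
      (MvPolynomial.finSuccEquiv k n).symm.toRingEquiv
    refine ⟨(MvPolynomial.finSuccEquiv k (n + 1)).toRingEquiv.trans <| (mapEquiv e).trans <|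
      (nagataEquiv _ N).trans (mapEquiv e'), ?_⟩
    change IsUnit (mapEquiv e' (nagataEquiv _ N (mapEquiv e g))).leadingCoeff
    rw [mapEquiv_apply, mapEquiv_apply, leadingCoeff_map_of_injective e'.injective, hN]
    exact (he.map C).map e'

end ChangeOfVariables

section StablyFree

variable {R : Type*} [CommRing R]

lemma isUnimodular_of_apply_eq_one {ι : Type*} [Fintype ι] {v : ι → R} {φ : (ι → R) →ₗ[R] R}
    (h : φ v = 1) : IsUnimodular v := by
  classical
  refine ⟨fun i ↦ φ fun j ↦ if i = j then 1 else 0, ?_⟩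
  rw [dotProduct_comm]
  exact (φ.pi_apply_eq_sum_univ v).symm.trans h

lemma free_of_linearEquiv_apply_eq_single {P ι : Type*} [AddCommGroup P] [Module R P] [Finite ι]
    [DecidableEq ι] (e : (P × R) ≃ₗ[R] (ι → R)) {i : ι} (he : e (0, 1) = Pi.single i 1) :
    Module.Free R P := by
  have he' (p : P) (c : R) : e (p, c) = e (p, 0) + c • Pi.single i 1 := by
    rw [← he, ← map_smul, ← map_add]
    simp
  let f : P →ₗ[R] ({j // j ≠ i} → R) :=
    LinearMap.funLeft R R Subtype.val ∘ₗ e.toLinearMap ∘ₗ LinearMap.inl R P R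
  have hf (p : P) (j : {j // j ≠ i}) : f p j = e (p, 0) j := rfl
  refine .of_equiv (LinearEquiv.ofBijective f ⟨?_, fun y ↦ ?_⟩).symm
  · refine (injective_iff_map_eq_zero f).mpr fun p hp ↦ ?_
    have : e (p, -e (p, 0) i) = 0 := by
      ext j
      rcases eq_or_ne j i with rfl | hj
      · simp [he' p (-_)]
      · simpa [he' p (-_), hj, hf] using congr($hp ⟨j, hj⟩)
    exact congr($((map_eq_zero_iff e e.injective).mp this).1)
  · obtain ⟨⟨p, c⟩, hp⟩ := e.surjective fun j ↦ if h : j = i then 0 else y ⟨j, h⟩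
    refine ⟨p, funext fun j ↦ ?_⟩
    have := congr($hp j)
    simpa [he' p c, j.2, hf] using this

namespace IsHermite

variable [Nontrivial R] {P : Type*} [AddCommGroup P] [Module R P] [Module.Finite R P]

lemma free_of_free_prod_self (hR : IsHermite R) [Module.Free R (P × R)] : Module.Free R P := by
  let e := (Module.finBasis R (P × R)).equivFun
  obtain ⟨i, g, hg⟩ := hR <| isUnimodular_of_apply_eq_one (v := e (0, 1))
    (φ := LinearMap.snd R P R ∘ₗ e.symm.toLinearMap) (by simp)
  exact free_of_linearEquiv_apply_eq_single
    (e.trans (Matrix.GeneralLinearGroup.toLin g).toLinearEquiv) (i := i) hg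

lemma free_of_free_prod_pi (hR : IsHermite R) {m : ℕ} (h : Module.Free R (P × (Fin m → R))) :
    Module.Free R P := by
  induction m with
  | zero => exact .of_equiv (LinearEquiv.prodUnique (R := R) (M := P) (M₂ := Fin 0 → R))
  | succ m ih =>
    let e : (P × (Fin (m + 1) → R)) ≃ₗ[R] (P × (Fin m → R)) × R :=
      ((LinearEquiv.refl R P).prodCongr ((Fin.consLinearEquiv R fun _ ↦ R).symm.trans
        (LinearEquiv.prodComm R _ _))).trans (LinearEquiv.prodAssoc R P (Fin m → R) R).symm
    have := Module.Free.of_equiv e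
    exact ih (hR.free_of_free_prod_self (P := P × (Fin m → R)))

variable (P) in
lemma free_of_isStablyFree (hR : IsHermite R) [Module.IsStablyFree R P] : Module.Free R P := by
  obtain ⟨N, _, _, _, _, _⟩ := Module.IsStablyFree.exist_free_prod R P
  exact hR.free_of_free_prod_pi <| .of_equiv
    ((LinearEquiv.refl R P).prodCongr (Module.finBasis R N).equivFun)

end IsHermite

end StablyFree

section MonicTorsion

variable {A : Type*} [CommRing A] {g : A[X]}

lemma exists_linearMap_apply_monic_mul (hg : g.Monic) :
    ∃ δ : A[X] →ₗ[A] A[X], ∀ f, δ (g * f) = f := by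
  have hdiv (f : A[X]) : g * (f /ₘ g) = f - modByMonicHom g f := by
    rw [modByMonicHom_apply, modByMonic_eq_sub_mul_div, sub_sub_cancel]
  refine ⟨⟨⟨(· /ₘ g), fun f h ↦ hg.isRegular.left ?_⟩, fun c f ↦ hg.isRegular.left ?_⟩,
    fun f ↦ mul_divByMonic_cancel_left f hg⟩
  · simp only [mul_add, hdiv, map_add]
    ring
  · simp only [RingHom.id_apply, mul_smul_comm, hdiv, map_smul, smul_sub]

variable {P : Type*} [AddCommGroup P] [Module A[X] P] [Module A P] [IsScalarTower A A[X] P]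

lemma exists_linearMap_apply_monic_smul [Module.Projective A[X] P] (hg : g.Monic) :
    ∃ ρ : P →ₗ[A] P, ∀ x, ρ (g • x) = x := by
  obtain ⟨δ, hδ⟩ := exists_linearMap_apply_monic_mul hg
  obtain ⟨s, hs⟩ := Module.projective_def.mp ‹Module.Projective A[X] P›
  refine ⟨(Finsupp.linearCombination A[X] id).restrictScalars A ∘ₗ
    Finsupp.mapRange.linearMap δ ∘ₗ s.restrictScalars A, fun x ↦ ?_⟩
  have hδs : Finsupp.mapRange.linearMap δ (s (g • x)) = s x := by
    ext1 y
    simp [hδ]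
  exact (congrArg _ hδs).trans (hs x)

lemma finite_of_monic_smul_eq_zero [Module.Finite A[X] P] (hg : g.Monic)
    (hP : ∀ x : P, g • x = 0) : Module.Finite A P := by
  have := hg.finite_quotient
  let : Module (A[X] ⧸ Ideal.span {g}) P := Module.IsTorsionBySet.module
    ((Module.isTorsionBySet_span_singleton_iff g).mpr hP)
  have : IsScalarTower A[X] (A[X] ⧸ Ideal.span {g}) P := Module.IsTorsionBySet.isScalarTower _
  have : IsScalarTower A (A[X] ⧸ Ideal.span {g}) P := Module.IsTorsionBySet.isScalarTower _
  have := Module.Finite.of_restrictScalars_finite A[X] (A[X] ⧸ Ideal.span {g}) P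
  exact .trans (A[X] ⧸ Ideal.span {g}) P

lemma projective_quotient_of_monic_smul_mem [Module.Projective A P] (F : Submodule A[X] P)
    [Module.Projective A[X] F] (hg : g.Monic) (hF : ∀ x, g • x ∈ F) :
    Module.Projective A (P ⧸ F) := by
  obtain ⟨ρ, hρ⟩ := exists_linearMap_apply_monic_smul (P := F) hg
  let μ : P →ₗ[A] F := ((LinearMap.lsmul A[X] P g).codRestrict F hF).restrictScalars A
  let π : P →ₗ[A] P := LinearMap.id - F.subtype.restrictScalars A ∘ₗ ρ ∘ₗ μ
  have hπ : F.restrictScalars A ≤ LinearMap.ker π := fun x hx ↦ by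
    have hx : μ x = g • ⟨x, hx⟩ := rfl
    simp [π, hx, hρ]
  refine .of_split ((F.restrictScalars A).liftQ π hπ) (F.mkQ.restrictScalars A)
    (LinearMap.ext fun x ↦ ?_)
  obtain ⟨x, rfl⟩ := F.mkQ_surjective x
  change F.mkQ (x - (ρ (μ x) : F)) = F.mkQ x
  simp

end MonicTorsion

section CharacteristicSequence

variable {A K : Type*} [CommRing A] [AddCommGroup K] [Module A[X] K] [Module A K]
  [IsScalarTower A A[X] K]

variable (A K) in
/-- The evaluation `∑ xᵢ Xⁱ ↦ ∑ Xⁱ • xᵢ` from `K[X]` to an `A[X]`-module `K`. -/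
noncomputable def polynomialModuleEval : PolynomialModule A K →ₗ[A[X]] K where
  toFun u := PolynomialModule.eval (X : A[X]) (PolynomialModule.map A[X] LinearMap.id u)
  map_add' u v := by simp
  map_smul' p u := by
    rw [PolynomialModule.map_smul, PolynomialModule.eval_smul, RingHom.id_apply, algebraMap_eq,
      eval_map, eval₂_C_X]

variable (A K) in
/-- The characteristic operator `X - φ` of `K[X]`, where `φ` is the action of `X` on the
`A[X]`-module `K`, applied coefficientwise. -/
noncomputable def polynomialModuleCharHom : PolynomialModule A K →ₗ[A[X]] PolynomialModule A K where
  toFun u := (X : A[X]) • u - PolynomialModule.map A (Algebra.lsmul A A K (X : A[X])) u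
  map_add' u v := by
    rw [smul_add, map_add, add_sub_add_comm]
  map_smul' p u := by
    rw [PolynomialModule.map_smul, Algebra.algebraMap_self, Polynomial.map_id, smul_comm, smul_sub,
      RingHom.id_apply]

lemma polynomialModuleEval_single (n : ℕ) (x : K) :
    polynomialModuleEval A K (.single A n x) = (X ^ n : A[X]) • x := by
  simp [polynomialModuleEval]

lemma polynomialModuleCharHom_single (n : ℕ) (x : K) :
    polynomialModuleCharHom A K (.single A n x) =
      .single A (n + 1) x - .single A n ((X : A[X]) • x) := by
  simp [polynomialModuleCharHom, ← monomial_one_one_eq_X, add_comm]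

lemma polynomialModuleEval_surjective : Function.Surjective (polynomialModuleEval A K) :=
  fun x ↦ ⟨.single A 0 x, by simp [polynomialModuleEval_single]⟩

lemma polynomialModuleEval_comp_charHom :
    polynomialModuleEval A K ∘ₗ polynomialModuleCharHom A K = 0 := by
  ext u
  induction u using PolynomialModule.induction_linear with
  | zero => simp
  | add u v hu hv => rw [map_add, hu, hv]; simp
  | single n x =>
    simp [polynomialModuleCharHom_single, polynomialModuleEval_single, pow_succ, mul_smul]

lemma sub_single_mem_range_polynomialModuleCharHom (u : PolynomialModule A K) :
    u - .single A 0 (polynomialModuleEval A K u) ∈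
      LinearMap.range (polynomialModuleCharHom A K) := by
  induction u using PolynomialModule.induction_linear with
  | zero => simp
  | add u v hu hv =>
    rw [map_add, PolynomialModule.single_add, add_sub_add_comm]
    exact add_mem hu hv
  | single n x =>
    induction n generalizing x with
    | zero => simp [polynomialModuleEval_single]
    | succ n ih =>
      convert add_mem (LinearMap.mem_range_self _ (.single A n x)) (ih ((X : A[X]) • x)) using 1
      rw [polynomialModuleCharHom_single, polynomialModuleEval_single, polynomialModuleEval_single,
        smul_smul, ← pow_succ, sub_add_sub_cancel]

lemma range_polynomialModuleCharHom :
    LinearMap.range (polynomialModuleCharHom A K) = LinearMap.ker (polynomialModuleEval A K) := by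
  refine le_antisymm (LinearMap.range_le_ker_iff.mpr polynomialModuleEval_comp_charHom)
    fun u hu ↦ ?_
  simpa [LinearMap.mem_ker.mp hu] using sub_single_mem_range_polynomialModuleCharHom u

lemma polynomialModuleCharHom_coeff_succ (u : PolynomialModule A K) (n : ℕ) :
    (polynomialModuleCharHom A K u).coeff (n + 1) = u.coeff n - (X : A[X]) • u.coeff (n + 1) := by
  change ((X : A[X]) • u).coeff (n + 1) - (X : A[X]) • u.coeff (n + 1) = _
  rw [← monomial_one_one_eq_X, PolynomialModule.monomial_smul_apply, if_pos (by simp), one_smul,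
    Nat.add_sub_cancel]

lemma polynomialModuleCharHom_injective : Function.Injective (polynomialModuleCharHom A K) := by
  refine (injective_iff_map_eq_zero _).mpr fun u hu ↦ ?_
  have hcoeff (n : ℕ) : u.coeff n = (X : A[X]) • u.coeff (n + 1) := by
    rw [← sub_eq_zero, ← polynomialModuleCharHom_coeff_succ, hu]
    rfl
  by_contra hne
  have hsupp : u.coeff.support.Nonempty := by simpa
  refine Finsupp.mem_support_iff.mp (Finset.max'_mem _ hsupp) ?_
  have hlast : u.coeff (u.coeff.support.max' hsupp + 1) = 0 :=
    Finsupp.notMem_support_iff.mp fun h ↦ (Finset.le_max' _ _ h).not_gt (Nat.lt_succ_self _)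
  rw [hcoeff, hlast, smul_zero]

end CharacteristicSequence

section Schanuel

variable {R M N K : Type*} [CommRing R] [AddCommGroup M] [Module R M] [AddCommGroup N] [Module R N]
  [AddCommGroup K] [Module R K]

/-- Schanuel's isomorphism for two presentations of `K`, built from mutual lifts `s` and `t`. -/
noncomputable def schanuelEquiv {p : M →ₗ[R] K} {q : N →ₗ[R] K} {s : N →ₗ[R] M} {t : M →ₗ[R] N}
    (hs : p ∘ₗ s = q) (ht : q ∘ₗ t = p) : (LinearMap.ker p × N) ≃ₗ[R] LinearMap.ker q × M :=
  have hs' (x) : p (s x) = q x := congr($hs x)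
  have ht' (x) : q (t x) = p x := congr($ht x)
  { toFun z := (⟨z.2 - t (z.1 + s z.2), by simp [hs', ht']⟩, z.1 + s z.2)
    invFun z := (⟨z.2 - s (z.1 + t z.2), by simp [hs', ht']⟩, z.1 + t z.2)
    map_add' x y := by ext <;> simp <;> abel
    map_smul' c x := by ext <;> simp [smul_sub]
    left_inv z := by ext <;> simp
    right_inv z := by ext <;> simp }

lemma nonempty_ker_prod_equiv_of_surjective [Module.Projective R M] [Module.Projective R N]
    {p : M →ₗ[R] K} {q : N →ₗ[R] K} (hp : Function.Surjective p) (hq : Function.Surjective q) :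
    Nonempty ((LinearMap.ker p × N) ≃ₗ[R] LinearMap.ker q × M) := by
  obtain ⟨s, hs⟩ := Module.projective_lifting_property p q hp
  obtain ⟨t, ht⟩ := Module.projective_lifting_property q p hq
  exact ⟨schanuelEquiv hs ht⟩

end Schanuel

section FreeResolution

variable {A M K : Type*} [CommRing A] [AddCommGroup M] [Module A[X] M] [AddCommGroup K]
  [Module A[X] K] [Module A K] [IsScalarTower A A[X] K]

lemma isStablyFree_of_surjective [Module.Projective A[X] M] [Module.Finite A K] [Module.Free A K]
    {p : M →ₗ[A[X]] K} (hp : Function.Surjective p) [Module.Free A[X] (LinearMap.ker p)] :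
    Module.IsStablyFree A[X] M := by
  let eK := PolynomialModule.polynomialTensorProductLEquivPolynomialModule A K
  have := Module.Free.of_equiv eK
  have := Module.Finite.equiv eK
  let eker : PolynomialModule A K ≃ₗ[A[X]] LinearMap.ker (polynomialModuleEval A K) :=
    (LinearEquiv.ofInjective _ polynomialModuleCharHom_injective).trans
      (LinearEquiv.ofEq _ _ range_polynomialModuleCharHom)
  have := Module.Free.of_equiv eker
  have := Module.Finite.equiv eker
  obtain ⟨e⟩ := nonempty_ker_prod_equiv_of_surjective hp (polynomialModuleEval_surjective (A := A))
  have := Module.Free.of_equiv e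
  exact .of_free_prod' A[X] M (LinearMap.ker (polynomialModuleEval A K))

end FreeResolution

section InductiveStep

universe v

lemma exists_free_smul_mem (R M : Type*) [CommRing R] [IsDomain R] [AddCommGroup M] [Module R M]
    [Module.Finite R M] :
    ∃ F : Submodule R M, Module.Free R F ∧ ∃ g : R, g ≠ 0 ∧ ∀ x, g • x ∈ F := by
  obtain ⟨r, t, ht⟩ := Module.Finite.exists_fin (R := R) (M := M)
  obtain ⟨s, hs, hmax⟩ := exists_maximal_linearIndepOn R t
  have hts (i : Fin r) : ∃ a : R, a ≠ 0 ∧ a • t i ∈ Submodule.span R (t '' s) := by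
    by_cases hi : i ∈ s
    · exact ⟨1, one_ne_zero, by simpa using Submodule.subset_span (Set.mem_image_of_mem t hi)⟩
    · exact hmax i hi
  choose a ha hat using hts
  refine ⟨Submodule.span R (t '' s), ?_, ∏ i, a i, Finset.prod_ne_zero_iff.mpr fun i _ ↦ ha i, ?_⟩
  · rw [Set.image_eq_range]
    exact .of_basis (Module.Basis.span hs)
  · suffices h : ⊤ ≤ (Submodule.span R (t '' s)).comap (LinearMap.lsmul R M (∏ i, a i)) from
      fun x ↦ h Submodule.mem_top
    rw [← ht, Submodule.span_le, Set.range_subset_iff]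
    intro i
    change (∏ i, a i) • t i ∈ Submodule.span R (t '' s)
    rw [← Finset.prod_erase_mul _ _ (Finset.mem_univ i), mul_smul]
    exact Submodule.smul_mem _ _ (hat i)

lemma projective_of_isScalarTower (R S M : Type*) [CommRing R] [CommRing S] [Algebra R S]
    [AddCommGroup M] [Module S M] [Module R M] [IsScalarTower R S M] [Module.Projective R S]
    [Module.Projective S M] : Module.Projective R M := by
  classical
  have : Module.Projective R (M →₀ S) := .of_equiv (finsuppLequivDFinsupp R).symm
  obtain ⟨s, hs⟩ := Module.projective_def'.mp ‹Module.Projective S M›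
  exact .of_split (s.restrictScalars R) ((Finsupp.linearCombination S id).restrictScalars R)
    (LinearMap.ext fun x ↦ congr($hs x))

variable {A : Type*} [CommRing A]
  (hA : ∀ (K : Type v) [AddCommGroup K] [Module A K] [Module.Finite A K] [Module.Projective A K],
    Module.Free A K)
include hA

lemma isStablyFree_of_monic_smul_mem (M : Type v) [AddCommGroup M] [Module A[X] M]
    [Module.Finite A[X] M] [Module.Projective A[X] M] (F : Submodule A[X] M) [Module.Free A[X] F]
    {g : A[X]} (hg : g.Monic) (hF : ∀ x, g • x ∈ F) : Module.IsStablyFree A[X] M := by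
  let : Module A M := Module.compHom M (C : A →+* A[X])
  have : IsScalarTower A A[X] M := ⟨fun a p x ↦ by rw [smul_eq_C_mul, mul_smul]; rfl⟩
  have := projective_of_isScalarTower A A[X] M
  have := projective_quotient_of_monic_smul_mem F hg hF
  have := finite_of_monic_smul_eq_zero (P := M ⧸ F) hg fun x ↦ by
    obtain ⟨x, rfl⟩ := F.mkQ_surjective x
    rw [← map_smul, Submodule.mkQ_apply, Submodule.Quotient.mk_eq_zero]
    exact hF x
  have := hA (M ⧸ F)
  have : Module.Free A[X] (LinearMap.ker F.mkQ) := by rwa [Submodule.ker_mkQ]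
  exact isStablyFree_of_surjective (A := A) F.mkQ_surjective

lemma IsHermite.free_of_forall_exists_ringEquiv {R : Type*} [CommRing R] [IsDomain R]
    (hR : IsHermite R) (h : ∀ f : R, f ≠ 0 → ∃ e : R ≃+* A[X], IsUnit (e f).leadingCoeff)
    (M : Type v) [AddCommGroup M] [Module R M] [Module.Finite R M] [Module.Projective R M] :
    Module.Free R M := by
  obtain ⟨F, _, g, hg0, hg⟩ := exists_free_smul_mem R M
  obtain ⟨e, he⟩ := h g hg0
  obtain ⟨u, hu⟩ := exists_units_monic_smul he
  have : Nontrivial A[X] := e.symm.nontrivial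
  let : Module A[X] M := Module.compHom M (e.symm : A[X] →+* R)
  have hsmul (p : A[X]) (x : M) : p • x = e.symm p • x := rfl
  have := RingHomInvPair.of_ringEquiv e
  have := RingHomInvPair.symm (e : R →+* A[X]) (e.symm : A[X] →+* R)
  let φ : M ≃ₛₗ[(e : R →+* A[X])] M :=
    { AddEquiv.refl M with map_smul' := fun c x ↦ by simp [hsmul] }
  have : Module.Finite A[X] M := .of_surjective φ.toLinearMap φ.surjective
  have : Module.Projective A[X] M := .of_equiv φ
  have : Module.Free A[X] (F.map φ.toLinearMap) := .of_equiv (φ.submoduleMap F)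
  have hgF (x : M) : (u • e g) • x ∈ F.map φ.toLinearMap := by
    refine ⟨e.symm u • g • x, F.smul_mem _ (hg x), ?_⟩
    rw [Units.smul_def, smul_eq_mul, hsmul, map_mul, e.symm_apply_apply, mul_smul]
    rfl
  have := isStablyFree_of_monic_smul_mem hA M (F.map φ.toLinearMap) hu hgF
  have := (hR.of_ringEquiv e).free_of_isStablyFree M
  exact .of_equiv φ.symm

end InductiveStep

lemma isLocalRing_mvPolynomial_of_isEmpty (k σ : Type*) [CommRing k] [IsLocalRing k] [IsEmpty σ] :
    IsLocalRing (MvPolynomial σ k) :=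
  (MvPolynomial.isEmptyAlgEquiv k σ).symm.toRingEquiv.isLocalRing

lemma isHermite_mvPolynomial (k : Type*) [Field k] (n : ℕ) :
    IsHermite (MvPolynomial (Fin n) k) := by
  induction n with
  | zero =>
    have := isLocalRing_mvPolynomial_of_isEmpty k (Fin 0)
    exact .of_isLocalRing
  | succ n ih => exact ih.of_forall_exists_ringEquiv fun _ ↦ exists_ringEquiv_isUnit_leadingCoeff

/-- **Quillen–Suslin theorem**: every finitely generated projective module over a
polynomial ring `k[x₁,…,xₙ]` over a field `k` is free. -/
theorem quillen_suslin {k : Type*} [Field k] (n : ℕ)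
    (M : Type*) [AddCommGroup M] [Module (MvPolynomial (Fin n) k) M]
    [Module.Finite (MvPolynomial (Fin n) k) M]
    [Module.Projective (MvPolynomial (Fin n) k) M] :
    Module.Free (MvPolynomial (Fin n) k) M := by
  induction n generalizing M with
  | zero =>
    have := isLocalRing_mvPolynomial_of_isEmpty k (Fin 0)
    exact Module.free_of_flat_of_isLocalRing
  | succ n ih =>
    exact (isHermite_mvPolynomial k (n + 1)).free_of_forall_exists_ringEquiv (fun K ↦ ih K)
      (fun _ ↦ exists_ringEquiv_isUnit_leadingCoeff) M
end
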